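/- Let -1/2 < s₀ ≤ 0. Then there exists b₁ > 1/2 such that for every b with 1/2 < b < b₁ and every Schwartz function ψ : ℝ → ℂ there is a constant C > 0 with the following property: for every sequence α : ℤ → ℂ with ∑_{k∈ℤ} ⟨k⟩^{2s₀} |α_k|² < ∞, defining for q ∈ ℤ and τ ∈ ℝ the quantity ĉ_q(τ) = ∑_{n∈ℤ} conj(α_n) · conj(α_{-n-q}) · ψ̂(τ - n² - (n+q)²), one has ∑_{q∈ℤ} ∫_ℝ ⟨τ + q²⟩^{2(b-1)} |ĉ_q(τ)|² dτ ≤ C (∑_{k∈ℤ} ⟨k⟩^{2s₀} |α_k|²)². -/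

import Mathlib

/-- The Japanese bracket `⟨x⟩ = (1 + x²)^{1/2}`. -/
noncomputable def jb (x : ℝ) : ℝ := Real.sqrt (1 + x ^ 2)

/-- The time-Fourier transform `ψ̂(τ) = ∫_ℝ e^{-iτt} ψ(t) dt`. -/
noncomputable def ft (ψ : ℝ → ℂ) (τ : ℝ) : ℂ :=
  ∫ t : ℝ, Complex.exp (-Complex.I * (τ : ℂ) * (t : ℂ)) * ψ t

/-!
The symbol `ψ̂` concentrates `ĉ_q` near `τ = n² + m²`, where `m = -n - q`. There the resonance
relation `τ + q² = n² + m² + q²` bounds `⟨n⟩⟨m⟩` by `⟨τ + q²⟩`, up to powers of the distance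
`x = τ - n² - m²` that the rapid decay of `ψ̂` absorbs. Hence the weight `⟨τ + q²⟩^{2(b-1)}` pays
for `⟨n⟩^{2s₀}⟨m⟩^{2s₀}` as soon as `b - 1 ≤ min(s₀, 0)`.

For `r < -1/2` the kernel `⟨x⟩^r` is summable over `n`, uniformly in `q` and `τ`, because
`n² + (n + q)²` grows quadratically. Cauchy–Schwarz in `n` with respect to this kernel followed by
Tonelli reduces the estimate to the convolution identity `∑_q ∑_n F(n) G(-n - q) = ∑ F · ∑ G`.
-/

open MeasureTheory FourierTransform
open scoped ENNReal NNReal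

section Bracket

variable {r x y z c : ℝ}

lemma one_le_jb (x : ℝ) : 1 ≤ jb x :=
  Real.one_le_sqrt.2 (le_add_of_nonneg_right (sq_nonneg x))

lemma jb_pos (x : ℝ) : 0 < jb x :=
  one_pos.trans_le (one_le_jb x)

lemma jb_sq (x : ℝ) : jb x ^ 2 = 1 + x ^ 2 :=
  Real.sq_sqrt (by positivity)

lemma jb_neg (x : ℝ) : jb (-x) = jb x := by
  rw [jb, jb, neg_sq]

lemma abs_le_jb (x : ℝ) : |x| ≤ jb x :=
  Real.abs_le_sqrt (by linarith)

lemma jb_le_mul_jb_of_sq_le (hc : 0 ≤ c) (h : 1 + y ^ 2 ≤ c ^ 2 * (1 + x ^ 2)) :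
    jb y ≤ c * jb x :=
  Real.sqrt_le_iff.2 ⟨mul_nonneg hc (jb_pos x).le, by rwa [mul_pow, jb_sq]⟩

lemma jb_le_mul_one_add_abs_div (hc : 1 ≤ c) (x : ℝ) : jb x ≤ c * (1 + |x / c|) := by
  have hc₀ : 0 < c := one_pos.trans_le hc
  calc jb x ≤ 1 + |x| := by
        simpa only [jb, Real.norm_eq_abs, sq_abs] using sqrt_one_add_norm_sq_le x
    _ ≤ c + |x| := by gcongr
    _ = c * (1 + |x / c|) := by
        rw [abs_div, abs_of_pos hc₀, mul_add, mul_one, mul_div_cancel₀ _ hc₀.ne']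

lemma jb_rpow (r x : ℝ) : jb x ^ r = (1 + x ^ 2) ^ (r / 2) := by
  rw [jb, Real.sqrt_eq_rpow, ← Real.rpow_mul (by positivity)]
  ring_nf

lemma continuous_jb : Continuous jb := by
  unfold jb
  fun_prop

lemma jb_mul_jb_le (n m q τ : ℝ) :
    jb n * jb m ≤ 2 * (jb (τ + q ^ 2) * jb (τ - n ^ 2 - m ^ 2)) := by
  set T := jb (τ + q ^ 2)
  set X := jb (τ - n ^ 2 - m ^ 2)
  have am_gm : jb n * jb m ≤ 1 + (n ^ 2 + m ^ 2) / 2 := by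
    linarith [two_mul_le_add_sq (jb n) (jb m), jb_sq n, jb_sq m]
  have resonance : n ^ 2 + m ^ 2 ≤ T + X := by
    linarith [(le_abs_self _).trans (abs_le_jb (τ + q ^ 2)),
      (neg_le_abs _).trans (abs_le_jb (τ - n ^ 2 - m ^ 2)), sq_nonneg q]
  nlinarith [one_le_jb (τ + q ^ 2), one_le_jb (τ - n ^ 2 - m ^ 2)]

lemma rpow_le_mul_rpow_of_nonpos (hy : 0 < y) (hc : 0 < c) (h : y ≤ c * x) (hr : r ≤ 0) :
    x ^ r ≤ c ^ (-r) * y ^ r := by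
  have hx : 0 < x := pos_of_mul_pos_right (hy.trans_le h) hc.le
  calc x ^ r = c ^ (-r) * (c * x) ^ r := by
        rw [Real.mul_rpow hc.le hx.le, ← mul_assoc, ← Real.rpow_add hc, neg_add_cancel,
          Real.rpow_zero, one_mul]
    _ ≤ c ^ (-r) * y ^ r :=
        mul_le_mul_of_nonneg_left (Real.rpow_le_rpow_of_nonpos hy h hr) (by positivity)

/-- The power `⟨x⟩^r` of the Japanese bracket as an extended nonnegative real, so that sums and
integrals of it need no convergence hypotheses. -/
noncomputable def jbPow (r x : ℝ) : ℝ≥0∞ :=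
  ENNReal.ofReal (jb x ^ r)

lemma jbPow_neg_right (r x : ℝ) : jbPow r (-x) = jbPow r x := by
  rw [jbPow, jbPow, jb_neg]

lemma jbPow_add_left (r s x : ℝ) : jbPow (r + s) x = jbPow r x * jbPow s x := by
  rw [jbPow, Real.rpow_add (jb_pos x), ENNReal.ofReal_mul (Real.rpow_nonneg (jb_pos x).le r)]
  rfl

lemma jbPow_le_jbPow_of_exponent_le {s : ℝ} (h : r ≤ s) (x : ℝ) : jbPow r x ≤ jbPow s x :=
  ENNReal.ofReal_le_ofReal (Real.rpow_le_rpow_of_exponent_le (one_le_jb x) h)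

@[fun_prop]
lemma measurable_jbPow (r : ℝ) : Measurable (jbPow r) :=
  (continuous_jb.measurable.pow_const r).ennreal_ofReal

lemma jbPow_le_of_jb_le (hr : r ≤ 0) (hc : 0 < c) (h : jb y ≤ c * jb x) :
    jbPow r x ≤ ENNReal.ofReal (c ^ (-r)) * jbPow r y := by
  rw [jbPow, jbPow, ← ENNReal.ofReal_mul (by positivity)]
  exact ENNReal.ofReal_le_ofReal (rpow_le_mul_rpow_of_nonpos (jb_pos y) hc h hr)

lemma jbPow_le_of_sq_le_abs (hr : r ≤ 0) (h : z ^ 2 ≤ |x|) :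
    jbPow r x ≤ ENNReal.ofReal (2 ^ (-r)) * jbPow (2 * r) z := by
  have hjb : jb z ^ 2 ≤ 2 * jb x := by
    linarith [jb_sq z, one_le_jb x, abs_le_jb x]
  rw [jbPow, jbPow, Real.rpow_mul (jb_pos z).le, Real.rpow_two,
    ← ENNReal.ofReal_mul (by positivity)]
  exact ENNReal.ofReal_le_ofReal
    (rpow_le_mul_rpow_of_nonpos (pow_pos (jb_pos z) 2) two_pos hjb hr)

lemma jbPow_add_sq_le (hr : r ≤ 0) (n m q τ : ℝ) :
    jbPow r (τ + q ^ 2) ≤ ENNReal.ofReal (2 ^ (-r)) * (jbPow r n * jbPow r m) *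
      jbPow (-r) (τ - n ^ 2 - m ^ 2) := by
  have hT := (jb_pos (τ + q ^ 2)).le
  have hX := jb_pos (τ - n ^ 2 - m ^ 2)
  have hn := (jb_pos n).le
  have hm := (jb_pos m).le
  simp only [jbPow]
  rw [← ENNReal.ofReal_mul (by positivity), ← ENNReal.ofReal_mul (by positivity),
    ← ENNReal.ofReal_mul (by positivity), ← Real.mul_rpow hn hm]
  refine ENNReal.ofReal_le_ofReal ?_
  calc jb (τ + q ^ 2) ^ r
      = (jb (τ + q ^ 2) * jb (τ - n ^ 2 - m ^ 2)) ^ r * jb (τ - n ^ 2 - m ^ 2) ^ (-r) := by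
        rw [Real.mul_rpow hT hX.le, mul_assoc, ← Real.rpow_add hX, add_neg_cancel,
          Real.rpow_zero, mul_one]
    _ ≤ _ := by
        gcongr
        exact rpow_le_mul_rpow_of_nonpos (mul_pos (jb_pos n) (jb_pos m)) two_pos
          (jb_mul_jb_le n m q τ) hr

lemma lintegral_jbPow_ne_top (hr : r < -1) : ∫⁻ x, jbPow r x ≠ ⊤ := by
  have hint : Integrable fun x : ℝ => jb x ^ r := by
    simpa only [jb_rpow, Real.norm_eq_abs, sq_abs, neg_neg] using
      integrable_rpow_neg_one_add_norm_sq (E := ℝ) (μ := volume) (r := -r)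
        (by rw [Module.finrank_self]; push_cast; linarith)
  exact hint.lintegral_lt_top.ne

end Bracket

section LatticeSums

variable {r : ℝ}

lemma summable_jb_rpow (hr : r < -1) : Summable fun n : ℤ => jb n ^ r := by
  have habs : Summable fun n : ℤ => |(n : ℝ)| ^ r := by
    simpa only [neg_neg] using Real.summable_abs_int_rpow (b := -r) (by linarith)
  refine habs.of_norm_bounded_eventually ?_
  filter_upwards [(Set.finite_singleton (0 : ℤ)).compl_mem_cofinite] with n hn
  rw [Real.norm_of_nonneg (Real.rpow_nonneg (jb_pos n).le r)]
  exact Real.rpow_le_rpow_of_nonpos (abs_pos.2 (Int.cast_ne_zero.2 hn)) (abs_le_jb n)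
    (by linarith)

lemma tsum_jbPow_ne_top (hr : r < -1) : ∑' n : ℤ, jbPow r n ≠ ⊤ :=
  (summable_jb_rpow hr).tsum_ofReal_ne_top

lemma exists_tsum_jbPow_add_le (hr : r < -1) :
    ∃ M : ℝ≥0, ∀ c : ℝ, ∑' n : ℤ, jbPow r (n + c) ≤ M := by
  refine ⟨(ENNReal.ofReal (2 ^ (-r)) * ∑' n : ℤ, jbPow r n).toNNReal, fun c => ?_⟩
  rw [ENNReal.coe_toNNReal (ENNReal.mul_ne_top ENNReal.ofReal_ne_top (tsum_jbPow_ne_top hr)),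
    ← (Equiv.addRight (round c)).tsum_eq fun n : ℤ => jbPow r n, ← ENNReal.tsum_mul_left]
  refine ENNReal.tsum_le_tsum fun n => jbPow_le_of_jb_le (by linarith) two_pos ?_
  obtain ⟨hlow, hupp⟩ := abs_le.1 (abs_sub_round c)
  refine jb_le_mul_jb_of_sq_le zero_le_two ?_
  rw [Equiv.coe_addRight, Int.cast_add]
  nlinarith [sq_nonneg (n + c + (c - round c))]

lemma sq_abs_sub_sqrt_le (y A : ℝ) : (|y| - √A) ^ 2 ≤ |y ^ 2 - A| := by
  rcases le_total 0 A with hA | hA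
  · have hsum : |(|y| - √A)| ≤ |y| + √A :=
      abs_le.2 ⟨by linarith [abs_nonneg y], by linarith [Real.sqrt_nonneg A]⟩
    calc (|y| - √A) ^ 2 = |(|y| - √A)| * |(|y| - √A)| := by rw [abs_mul_abs_self, sq]
      _ ≤ |(|y| - √A)| * (|y| + √A) := by gcongr
      _ = |(|y| - √A) * (|y| + √A)| := by
        rw [abs_mul, abs_of_nonneg (by positivity : 0 ≤ |y| + √A)]
      _ = |y ^ 2 - A| := by
        rw [mul_comm, ← sq_sub_sq, sq_abs, Real.sq_sqrt hA]
  · rw [Real.sqrt_eq_zero_of_nonpos hA, sub_zero, sq_abs]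
    exact (by linarith : y ^ 2 ≤ y ^ 2 - A).trans (le_abs_self _)

lemma exists_tsum_jbPow_phase_le (hr : r < -(1 / 2)) :
    ∃ M : ℝ≥0, ∀ q τ : ℝ, ∑' n : ℤ, jbPow r (τ - n ^ 2 - (n + q) ^ 2) ≤ M := by
  obtain ⟨M, hM⟩ := exists_tsum_jbPow_add_le (r := 2 * r) (by linarith)
  refine ⟨(2 ^ (-r) : ℝ).toNNReal * (M + M), fun q τ => ?_⟩
  set a := √((2 * τ - q ^ 2) / 4)
  have hroots (n : ℤ) : jbPow r (τ - n ^ 2 - (n + q) ^ 2) ≤ ENNReal.ofReal (2 ^ (-r)) *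
      (jbPow (2 * r) (n + (q / 2 + a)) + jbPow (2 * r) (n + (q / 2 - a))) := by
    have hphase : (|n + q / 2| - a) ^ 2 ≤ |τ - n ^ 2 - (n + q) ^ 2| := by
      refine (sq_abs_sub_sqrt_le _ _).trans ?_
      rw [show τ - n ^ 2 - (n + q) ^ 2 = -2 * ((n + q / 2) ^ 2 - (2 * τ - q ^ 2) / 4) by ring,
        abs_mul, abs_neg, abs_two]
      exact le_mul_of_one_le_left (abs_nonneg _) one_le_two
    refine (jbPow_le_of_sq_le_abs (by linarith) hphase).trans ?_
    gcongr
    rcases abs_choice (n + q / 2 : ℝ) with h | h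
    · rw [h, add_sub_assoc]
      exact le_add_self
    · rw [h, ← neg_add', jbPow_neg_right, add_assoc]
      exact le_self_add
  calc ∑' n : ℤ, jbPow r (τ - n ^ 2 - (n + q) ^ 2)
      ≤ _ := ENNReal.tsum_le_tsum hroots
    _ ≤ ENNReal.ofReal (2 ^ (-r)) * (M + M) := by
        rw [ENNReal.tsum_mul_left, ENNReal.tsum_add]
        gcongr <;> exact hM _

end LatticeSums

lemma sq_tsum_mul_le {ι : Type*} (a k : ι → ℝ≥0∞) :
    (∑' n, a n * k n) ^ 2 ≤ (∑' n, k n) * ∑' n, a n ^ 2 * k n := by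
  have hsum : ∑' n, a n * k n ≤ ((∑' n, k n) * ∑' n, a n ^ 2 * k n) ^ (2⁻¹ : ℝ) := by
    rw [ENNReal.tsum_eq_iSup_sum]
    refine iSup_le fun s => ?_
    calc ∑ n ∈ s, a n * k n = ∑ n ∈ s, k n * a n := by simp only [mul_comm]
      _ ≤ (∑ n ∈ s, k n) ^ (1 - 2⁻¹ : ℝ) * (∑ n ∈ s, k n * a n ^ (2 : ℝ)) ^ (2⁻¹ : ℝ) :=
          ENNReal.inner_le_weight_mul_Lp_of_nonneg s one_le_two k a
      _ = ((∑ n ∈ s, k n) * ∑ n ∈ s, a n ^ 2 * k n) ^ (2⁻¹ : ℝ) := by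
          rw [show (1 - 2⁻¹ : ℝ) = 2⁻¹ by norm_num, ENNReal.mul_rpow_of_nonneg _ _ (by norm_num)]
          simp only [ENNReal.rpow_two, mul_comm]
      _ ≤ _ := by
          gcongr <;> exact ENNReal.sum_le_tsum s
  calc (∑' n, a n * k n) ^ 2 ≤ (((∑' n, k n) * ∑' n, a n ^ 2 * k n) ^ (2⁻¹ : ℝ)) ^ 2 := by gcongr
    _ = _ := by
      rw [← ENNReal.rpow_two, ENNReal.rpow_inv_rpow two_ne_zero]

lemma lintegral_mul_sq_tsum_le {ι X : Type*} [Countable ι] [MeasurableSpace X] {μ : Measure X}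
    {w : X → ℝ≥0∞} {K : ι → X → ℝ≥0∞} {M : ℝ≥0} {B : ι → ℝ≥0∞} (hw : Measurable w)
    (hK : ∀ n, Measurable (K n)) (hM : ∀ x, ∑' n, K n x ≤ M)
    (hB : ∀ n, ∫⁻ x, w x * K n x ∂μ ≤ B n) (a : ι → ℝ≥0∞) :
    ∫⁻ x, w x * (∑' n, a n * K n x) ^ 2 ∂μ ≤ M * ∑' n, a n ^ 2 * B n := by
  have hwK (n : ι) : Measurable fun x => w x * K n x := hw.mul (hK n)
  calc ∫⁻ x, w x * (∑' n, a n * K n x) ^ 2 ∂μ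
      ≤ ∫⁻ x, M * ∑' n, a n ^ 2 * (w x * K n x) ∂μ := by
        refine lintegral_mono fun x => ?_
        calc w x * (∑' n, a n * K n x) ^ 2 ≤ w x * (M * ∑' n, a n ^ 2 * K n x) := by
              gcongr
              exact (sq_tsum_mul_le a fun n => K n x).trans (by gcongr; exact hM x)
          _ = M * ∑' n, a n ^ 2 * (w x * K n x) := by
              simp only [mul_left_comm _ (w x), ENNReal.tsum_mul_left]
    _ = M * ∑' n, a n ^ 2 * ∫⁻ x, w x * K n x ∂μ := by
        rw [lintegral_const_mul' _ _ ENNReal.coe_ne_top,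
          lintegral_tsum fun n => (hwK n).aemeasurable.const_mul _]
        simp only [lintegral_const_mul _ (hwK _)]
    _ ≤ M * ∑' n, a n ^ 2 * B n := by
        gcongr with n
        exact hB n

section BilinearEstimate

/-- The squared `H^s` norm `∑_k ⟨k⟩^{2s} a_k²` of a function on the circle in terms of the moduli
`a_k` of its Fourier coefficients; it is infinite when the function is not in `H^s`. -/
noncomputable def sobolevNormSq (s : ℝ) (a : ℤ → ℝ≥0∞) : ℝ≥0∞ :=
  ∑' k : ℤ, jbPow (2 * s) k * a k ^ 2

lemma tsum_tsum_mul_neg_sub {G : Type*} [AddCommGroup G] (f g : G → ℝ≥0∞) :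
    ∑' q, ∑' n, f n * g (-n - q) = (∑' n, f n) * ∑' n, g n := by
  rw [ENNReal.tsum_comm, ← ENNReal.tsum_mul_right]
  refine tsum_congr fun n => ?_
  rw [ENNReal.tsum_mul_left, ← (Equiv.subLeft (-n)).tsum_eq g]
  rfl

variable {s β r : ℝ}

lemma lintegral_jbPow_mul_jbPow_le (hβ : β ≤ 0) (hβs : β ≤ s) (n q : ℝ) :
    ∫⁻ τ, jbPow (2 * β) (τ + q ^ 2) * jbPow r (τ - n ^ 2 - (n + q) ^ 2) ≤
      ENNReal.ofReal (2 ^ (-(2 * β))) * (∫⁻ τ, jbPow (r - 2 * β) τ) *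
        (jbPow (2 * s) n * jbPow (2 * s) (-n - q)) := by
  have hpt (τ : ℝ) : jbPow (2 * β) (τ + q ^ 2) * jbPow r (τ - n ^ 2 - (n + q) ^ 2) ≤
      ENNReal.ofReal (2 ^ (-(2 * β))) * (jbPow (2 * s) n * jbPow (2 * s) (-n - q)) *
        jbPow (r - 2 * β) (τ - (n ^ 2 + (n + q) ^ 2)) := by
    rw [sub_eq_neg_add r, jbPow_add_left, ← mul_assoc, ← sub_sub]
    gcongr
    refine (jbPow_add_sq_le (by linarith) n (-n - q) q τ).trans ?_
    rw [show (-n - q) ^ 2 = (n + q) ^ 2 by ring]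
    gcongr <;> exact jbPow_le_jbPow_of_exponent_le (by linarith) _
  calc _ ≤ _ := lintegral_mono hpt
    _ = _ := by
      rw [lintegral_const_mul _ (by fun_prop),
        lintegral_sub_right_eq_self (jbPow (r - 2 * β)), mul_right_comm]

theorem exists_tsum_lintegral_le_sobolevNormSq_mul (hβ : β ≤ 0) (hβs : β ≤ s)
    (hr : r < 2 * β - 1) :
    ∃ C : ℝ≥0, ∀ f g : ℤ → ℝ≥0∞,
      ∑' q : ℤ, ∫⁻ τ : ℝ, jbPow (2 * β) (τ + q ^ 2) *
          (∑' n : ℤ, f n * g (-n - q) * jbPow r (τ - n ^ 2 - (n + q) ^ 2)) ^ 2 ≤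
        C * (sobolevNormSq s f * sobolevNormSq s g) := by
  obtain ⟨M, hM⟩ := exists_tsum_jbPow_phase_le (r := r) (by linarith)
  set J := ENNReal.ofReal (2 ^ (-(2 * β))) * ∫⁻ τ, jbPow (r - 2 * β) τ
  have hJ : J ≠ ⊤ :=
    ENNReal.mul_ne_top ENNReal.ofReal_ne_top (lintegral_jbPow_ne_top (by linarith))
  refine ⟨M * J.toNNReal, fun f g => ?_⟩
  rw [ENNReal.coe_mul, ENNReal.coe_toNNReal hJ, sobolevNormSq, sobolevNormSq,
    ← tsum_tsum_mul_neg_sub, ← ENNReal.tsum_mul_left]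
  refine ENNReal.tsum_le_tsum fun q => ?_
  calc _ ≤ M * ∑' n : ℤ, (f n * g (-n - q)) ^ 2 *
          (J * (jbPow (2 * s) n * jbPow (2 * s) (-n - q))) :=
        lintegral_mul_sq_tsum_le (by fun_prop) (fun n => by fun_prop) (hM q)
          (fun n => lintegral_jbPow_mul_jbPow_le hβ hβs n q) _
    _ = M * J * ∑' n : ℤ, jbPow (2 * s) n * f n ^ 2 *
          (jbPow (2 * s) ((-n - q : ℤ) : ℝ) * g (-n - q) ^ 2) := by
        rw [← ENNReal.tsum_mul_left, ← ENNReal.tsum_mul_left]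
        refine tsum_congr fun n => ?_
        push_cast
        ring

end BilinearEstimate

lemma ft_eq_fourier (f : ℝ → ℂ) (x : ℝ) : ft f x = 𝓕 f (x / (2 * Real.pi)) := by
  rw [Real.fourier_real_eq_integral_exp_smul, ft]
  refine integral_congr_ae (.of_forall fun t => ?_)
  have hphase : -2 * Real.pi * t * (x / (2 * Real.pi)) = -(x * t) := by
    field_simp
  simp only [hphase, smul_eq_mul]
  push_cast
  ring_nf

lemma exists_jb_rpow_mul_norm_ft_le (ψ : SchwartzMap ℝ ℂ) (r : ℝ) :
    ∃ D : ℝ, ∀ x, jb x ^ r * ‖ft ψ x‖ ≤ D := by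
  set k := ⌈r⌉₊
  set S := 2 ^ k * (Finset.Iic (k, 0)).sup (fun m => SchwartzMap.seminorm ℝ m.1 m.2) (𝓕 ψ)
  have hdecay (y : ℝ) : (1 + |y|) ^ k * ‖(𝓕 ψ) y‖ ≤ S := by
    simpa only [norm_iteratedFDeriv_zero, Real.norm_eq_abs] using
      SchwartzMap.one_add_le_sup_seminorm_apply (𝕜 := ℝ) (m := (k, 0)) le_rfl le_rfl (𝓕 ψ) y
  have hweight (x : ℝ) : jb x ^ r ≤ (2 * Real.pi * (1 + |x / (2 * Real.pi)|)) ^ k :=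
    calc jb x ^ r ≤ jb x ^ (k : ℝ) :=
          Real.rpow_le_rpow_of_exponent_le (one_le_jb x) (Nat.le_ceil r)
      _ = jb x ^ k := Real.rpow_natCast _ _
      _ ≤ _ := pow_le_pow_left₀ (jb_pos x).le
          (jb_le_mul_one_add_abs_div (by linarith [Real.pi_gt_three]) x) k
  refine ⟨(2 * Real.pi) ^ k * S, fun x => ?_⟩
  calc jb x ^ r * ‖ft ψ x‖
      ≤ (2 * Real.pi * (1 + |x / (2 * Real.pi)|)) ^ k * ‖ft ψ x‖ := by
        gcongr
        exact hweight x
    _ = (2 * Real.pi) ^ k * ((1 + |x / (2 * Real.pi)|) ^ k * ‖(𝓕 ψ) (x / (2 * Real.pi))‖) := by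
        rw [ft_eq_fourier, SchwartzMap.fourier_coe, mul_pow, mul_assoc]
    _ ≤ (2 * Real.pi) ^ k * S := by
        gcongr
        exact hdecay _

lemma exists_enorm_ft_le_mul_jbPow (ψ : SchwartzMap ℝ ℂ) (r : ℝ) :
    ∃ D : ℝ≥0, ∀ x, ‖ft ψ x‖ₑ ≤ D * jbPow r x := by
  obtain ⟨D, hD⟩ := exists_jb_rpow_mul_norm_ft_le ψ (-r)
  refine ⟨D.toNNReal, fun x => ?_⟩
  have hjb : 0 ≤ jb x ^ r := Real.rpow_nonneg (jb_pos x).le r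
  calc ‖ft ψ x‖ₑ = ENNReal.ofReal (jb x ^ (-r) * ‖ft ψ x‖ * jb x ^ r) := by
        rw [mul_right_comm, ← Real.rpow_add (jb_pos x), neg_add_cancel, Real.rpow_zero, one_mul,
          ofReal_norm]
    _ ≤ ENNReal.ofReal (D * jb x ^ r) := by
        gcongr
        exact hD x
    _ = D.toNNReal * jbPow r x := ENNReal.ofReal_mul' hjb

lemma enorm_jb_rpow (r x : ℝ) : ‖jb x ^ r‖ₑ = jbPow r x :=
  Real.enorm_of_nonneg (Real.rpow_nonneg (jb_pos x).le r)

lemma enorm_tsum_conj_mul_conj_mul_le {ι : Type*} {u v φ : ι → ℂ} {K : ι → ℝ≥0∞} {D : ℝ≥0∞}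
    (hφ : ∀ n, ‖φ n‖ₑ ≤ D * K n) :
    ‖∑' n, (starRingEnd ℂ) (u n) * (starRingEnd ℂ) (v n) * φ n‖ₑ ≤
      D * ∑' n, ‖u n‖ₑ * ‖v n‖ₑ * K n := by
  rw [← ENNReal.tsum_mul_left]
  refine enorm_tsum_le_tsum_enorm.trans (ENNReal.tsum_le_tsum fun n => ?_)
  rw [enorm_mul, enorm_mul, RCLike.enorm_conj, RCLike.enorm_conj, mul_left_comm]
  gcongr
  exact hφ n

theorem exists_tsum_lintegral_enorm_le_sobolevNormSq_mul {s β r : ℝ} {φ : ℝ → ℂ} {D : ℝ≥0}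
    (hβ : β ≤ 0) (hβs : β ≤ s) (hr : r < 2 * β - 1) (hφ : ∀ x, ‖φ x‖ₑ ≤ D * jbPow r x) :
    ∃ C : ℝ≥0, ∀ u v : ℤ → ℂ,
      ∑' q : ℤ, ∫⁻ τ : ℝ, ‖jb (τ + q ^ 2) ^ (2 * β) *
          ‖∑' n : ℤ, (starRingEnd ℂ) (u n) * (starRingEnd ℂ) (v (-n - q)) *
            φ (τ - n ^ 2 - (n + q) ^ 2)‖ ^ 2‖ₑ ≤
        C * (sobolevNormSq s (fun k => ‖u k‖ₑ) * sobolevNormSq s (fun k => ‖v k‖ₑ)) := by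
  obtain ⟨C, hC⟩ := exists_tsum_lintegral_le_sobolevNormSq_mul hβ hβs hr
  refine ⟨D ^ 2 * C, fun u v => ?_⟩
  calc _ ≤ ∑' q : ℤ, ∫⁻ τ : ℝ, D ^ 2 * (jbPow (2 * β) (τ + q ^ 2) *
          (∑' n : ℤ, ‖u n‖ₑ * ‖v (-n - q)‖ₑ * jbPow r (τ - n ^ 2 - (n + q) ^ 2)) ^ 2) := by
        gcongr with q τ
        rw [enorm_mul, enorm_jb_rpow, enorm_pow, enorm_norm, mul_left_comm, ← mul_pow]
        gcongr
        exact enorm_tsum_conj_mul_conj_mul_le fun n => hφ _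
    _ ≤ D ^ 2 * (C * (sobolevNormSq s (fun k => ‖u k‖ₑ) * sobolevNormSq s (fun k => ‖v k‖ₑ))) := by
        simp only [lintegral_const_mul' _ _ (ENNReal.pow_ne_top ENNReal.coe_ne_top),
          ENNReal.tsum_mul_left]
        gcongr
        exact hC _ _
    _ = _ := by
        rw [← mul_assoc]
        norm_cast

lemma sobolevNormSq_enorm {s : ℝ} {α : ℤ → ℂ}
    (hα : Summable fun k : ℤ => jb k ^ (2 * s) * ‖α k‖ ^ 2) :
    sobolevNormSq s (fun k => ‖α k‖ₑ) =
      ENNReal.ofReal (∑' k : ℤ, jb k ^ (2 * s) * ‖α k‖ ^ 2) := by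
  have hjb (k : ℤ) : 0 ≤ jb k ^ (2 * s) := Real.rpow_nonneg (jb_pos k).le _
  rw [ENNReal.ofReal_tsum_of_nonneg (fun k => mul_nonneg (hjb k) (sq_nonneg _)) hα]
  refine tsum_congr fun k => ?_
  rw [ENNReal.ofReal_mul (hjb k), ENNReal.ofReal_pow (norm_nonneg _), ofReal_norm]
  rfl

lemma tsum_integral_le_of_tsum_lintegral_enorm_le {ι X : Type*} [MeasurableSpace X]
    {μ : Measure X} {f : ι → X → ℝ} {B : ℝ} (hB : 0 ≤ B)
    (h : ∑' i, ∫⁻ x, ‖f i x‖ₑ ∂μ ≤ ENNReal.ofReal B) : ∑' i, ∫ x, f i x ∂μ ≤ B := by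
  have henorm : ‖∑' i, ∫ x, f i x ∂μ‖ₑ ≤ ENNReal.ofReal B :=
    enorm_tsum_le_tsum_enorm.trans <|
      (ENNReal.tsum_le_tsum fun i => enorm_integral_le_lintegral_enorm (f i)).trans h
  rw [← ofReal_norm, ENNReal.ofReal_le_ofReal_iff hB] at henorm
  exact (le_abs_self _).trans henorm

theorem stmt1_general {s₀ b : ℝ} (hb : b ≤ 1) (hbs : b ≤ 1 + s₀) (ψ : SchwartzMap ℝ ℂ) :
    ∃ C : ℝ, 0 < C ∧
      ∀ α : ℤ → ℂ, Summable (fun k : ℤ => jb (k : ℝ) ^ (2 * s₀) * ‖α k‖ ^ 2) →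
        (∑' q : ℤ, ∫ τ : ℝ,
            jb (τ + (q : ℝ) ^ 2) ^ (2 * (b - 1)) *
              ‖∑' n : ℤ, (starRingEnd ℂ) (α n) * (starRingEnd ℂ) (α (-n - q)) *
                  ft (⇑ψ) (τ - (n : ℝ) ^ 2 - ((n : ℝ) + (q : ℝ)) ^ 2)‖ ^ 2)
          ≤ C * (∑' k : ℤ, jb (k : ℝ) ^ (2 * s₀) * ‖α k‖ ^ 2) ^ 2 := by
  obtain ⟨D, hD⟩ := exists_enorm_ft_le_mul_jbPow ψ (2 * (b - 1) - 2)
  obtain ⟨C, hC⟩ := exists_tsum_lintegral_enorm_le_sobolevNormSq_mul (s := s₀) (β := b - 1)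
    (by linarith) (by linarith) (by linarith) hD
  refine ⟨C + 1, by positivity, fun α hα => ?_⟩
  have hnorm := sobolevNormSq_enorm hα
  set S := ∑' k : ℤ, jb k ^ (2 * s₀) * ‖α k‖ ^ 2
  have hS : 0 ≤ S :=
    tsum_nonneg fun k => mul_nonneg (Real.rpow_nonneg (jb_pos k).le _) (sq_nonneg _)
  refine tsum_integral_le_of_tsum_lintegral_enorm_le (by positivity) ?_
  calc _ ≤ C * (ENNReal.ofReal S * ENNReal.ofReal S) := hnorm ▸ hC α α
    _ = ENNReal.ofReal (C * S ^ 2) := by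
        rw [ENNReal.ofReal_mul C.coe_nonneg, ENNReal.ofReal_pow hS, ENNReal.ofReal_coe_nnreal, sq]
    _ ≤ ENNReal.ofReal ((C + 1) * S ^ 2) := by
        gcongr
        exact le_add_of_nonneg_right zero_le_one

/-- the case `p = 2`, `s = 0` of the first Picard iterate estimate:
`‖u₁‖_{X^{0,b}} ≲ ‖f‖²_{H^{s₀}}` at the level of Fourier coefficients. -/
theorem stmt1 (s₀ : ℝ) (hs₀l : -(1 / 2) < s₀) (hs₀u : s₀ ≤ 0) :
    ∃ b₁ : ℝ, 1 / 2 < b₁ ∧ ∀ b : ℝ, 1 / 2 < b → b < b₁ →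
      ∀ ψ : SchwartzMap ℝ ℂ, ∃ C : ℝ, 0 < C ∧
        ∀ α : ℤ → ℂ, Summable (fun k : ℤ => jb (k : ℝ) ^ (2 * s₀) * ‖α k‖ ^ 2) →
          (∑' q : ℤ, ∫ τ : ℝ,
              jb (τ + (q : ℝ) ^ 2) ^ (2 * (b - 1)) *
                ‖∑' n : ℤ, (starRingEnd ℂ) (α n) * (starRingEnd ℂ) (α (-n - q)) *
                    ft (⇑ψ) (τ - (n : ℝ) ^ 2 - ((n : ℝ) + (q : ℝ)) ^ 2)‖ ^ 2)
            ≤ C * (∑' k : ℤ, jb (k : ℝ) ^ (2 * s₀) * ‖α k‖ ^ 2) ^ 2 :=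
  ⟨1 + s₀, by linarith, fun _ _ hb => stmt1_general (by linarith) hb.le⟩
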